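/- The limit inferior, as the positive integer N tends to infinity, of g₁(N)/N² equals 1/(4π²). -/

import Mathlib

/-!
The term `u` is negligible: comparing prime powers gives `0 ≤ u N ≤ N * d(N)`, with `d` the divisor
function, and pairing each divisor with its codivisor gives `d(N) ≤ 2√N`. Hence
`g₁(N) / N² = s(N) / 24 + o(1)`.

For the main term, `s(N)⁻¹ = ∏_{p ∣ N} (1 - p⁻²)⁻¹` is a finite subproduct of the Euler product of
`ζ(2) = π² / 6`, all of whose factors are at least `1`. Thus `s(N) ≥ 6 / π²` for every `N ≥ 1`.
Since `s(k!)⁻¹` is the partial Euler product over the primes `p ≤ k`, the values at factorials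
converge to `6 / π²`, so the lower bound `(1 / 24) (6 / π²) = 1 / (4π²)` is the limit inferior.
-/

open Real Filter Topology

/-- The completely multiplicative function `n ↦ n⁻²`, as a monoid homomorphism. -/
noncomputable def invSqHom : ℕ →*₀ ℝ where
  toFun n := ((n : ℝ) ^ 2)⁻¹
  map_zero' := by simp
  map_one' := by simp
  map_mul' m n := by push_cast; rw [mul_pow, mul_inv]

/-- The partial Euler product of `ζ(2)` over the primes below `n`. -/
noncomputable def eulerPartial (n : ℕ) : ℝ :=
  ∏ p ∈ Nat.primesBelow n, (1 - 1 / (p : ℝ) ^ 2)⁻¹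

lemma tendsto_eulerPartial : Tendsto eulerPartial atTop (𝓝 (π ^ 2 / 6)) := by
  have hsum : Summable (fun n => ‖invSqHom n‖) := by
    simp [invSqHom]
  have h := EulerProduct.eulerProduct_completely_multiplicative hsum
  have hz : ∑' n, invSqHom n = π ^ 2 / 6 := by
    rw [← hasSum_zeta_two.tsum_eq]
    simp [invSqHom]
  rw [hz] at h
  refine h.congr fun n => ?_
  simp [eulerPartial, invSqHom]

lemma one_sub_inv_sq_pos {p : ℕ} (hp : p.Prime) : 0 < 1 - 1 / (p : ℝ) ^ 2 := by
  have h2 : (2 : ℝ) ≤ p := by exact_mod_cast hp.two_le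
  rw [sub_pos, div_lt_one (by positivity)]
  nlinarith

lemma one_le_euler_factor {p : ℕ} (hp : p.Prime) : 1 ≤ (1 - 1 / (p : ℝ) ^ 2)⁻¹ := by
  refine (one_le_inv₀ (one_sub_inv_sq_pos hp)).2 ?_
  have : 0 ≤ 1 / (p : ℝ) ^ 2 := by positivity
  linarith

/-- Any finite subproduct of the Euler product is bounded by `ζ(2)`. -/
lemma prod_primeFactors_le (N : ℕ) :
    ∏ p ∈ N.primeFactors, (1 - 1 / (p : ℝ) ^ 2)⁻¹ ≤ π ^ 2 / 6 := by
  refine ge_of_tendsto tendsto_eulerPartial ?_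
  filter_upwards [eventually_gt_atTop N] with n hn
  have hsub : N.primeFactors ⊆ n.primesBelow := fun p hp => by
    rw [Nat.mem_primesBelow]
    exact ⟨(Nat.le_of_mem_primeFactors hp).trans_lt hn, Nat.prime_of_mem_primeFactors hp⟩
  exact Finset.prod_le_prod_of_subset_of_one_le hsub
    (fun p hp => zero_le_one.trans (one_le_euler_factor (Nat.prime_of_mem_primeFactors hp)))
    (fun p hp _ => one_le_euler_factor (Nat.prime_of_mem_primesBelow hp))

lemma primeFactors_factorial_eq (k : ℕ) :
    (Nat.factorial k).primeFactors = Nat.primesBelow (k + 1) := by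
  ext p
  rw [Nat.mem_primeFactors_of_ne_zero (Nat.factorial_ne_zero k), Nat.mem_primesBelow,
    Nat.lt_succ_iff, and_comm]
  exact and_congr_left fun hp => hp.dvd_factorial

/-- In each factorisation `n = d * (n / d)` one of the factors is at most `√n`. -/
lemma card_divisors_le_two_sqrt (n : ℕ) : n.divisors.card ≤ 2 * n.sqrt := by
  have hsub : n.divisors ⊆
      Finset.Icc 1 n.sqrt ∪ (Finset.Icc 1 n.sqrt).image (fun d => n / d) := by
    intro d hd
    obtain ⟨⟨e, he⟩, hn⟩ := Nat.mem_divisors.1 hd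
    have hd0 : 0 < d := Nat.pos_of_mem_divisors hd
    have he0 : 0 < e := Nat.pos_of_ne_zero (by rintro rfl; simp at he; exact hn he)
    rw [Finset.mem_union, Finset.mem_image]
    rcases le_or_gt d n.sqrt with h | h
    · exact Or.inl (Finset.mem_Icc.2 ⟨hd0, h⟩)
    · refine Or.inr ⟨e, Finset.mem_Icc.2 ⟨he0, ?_⟩, by
        rw [he, Nat.mul_div_cancel _ he0]⟩
      by_contra! h'
      have := Nat.lt_succ_sqrt n
      have : (n.sqrt + 1) * (n.sqrt + 1) ≤ d * e := Nat.mul_le_mul h h'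
      simp only [Nat.succ_eq_add_one] at *
      omega
  calc n.divisors.card ≤ _ := Finset.card_le_card hsub
    _ ≤ _ := Finset.card_union_le _ _
    _ ≤ n.sqrt + n.sqrt := by
      gcongr
      · simp
      · exact Finset.card_image_le.trans (by simp)
    _ = 2 * n.sqrt := by ring

/-- The value `s N` is a product over the distinct primes dividing `N`, written as the reciprocal
of a subproduct of the Euler product of `ζ(2)`. -/
lemma s_eq_prod (s : ℕ → ℝ) (hs1 : s 1 = 1)
    (hsmul : ∀ m n : ℕ, Nat.Coprime m n → s (m * n) = s m * s n)
    (hsp : ∀ p n : ℕ, p.Prime → 1 ≤ n → s (p ^ n) = 1 - 1 / (p : ℝ) ^ 2)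
    {N : ℕ} (hN : N ≠ 0) :
    s N = (∏ p ∈ N.primeFactors, (1 - 1 / (p : ℝ) ^ 2)⁻¹)⁻¹ := by
  rw [Nat.multiplicative_factorization s hsmul hs1 hN, Finset.prod_inv_distrib, inv_inv,
    Finsupp.prod, Nat.support_factorization]
  refine Finset.prod_congr rfl fun p hp => ?_
  have hpp := Nat.prime_of_mem_primeFactors hp
  exact hsp p _ hpp (hpp.factorization_pos_of_dvd hN (Nat.dvd_of_mem_primeFactors hp))

/-- Comparison of `u` with the multiplicative function `N * d(N)`: on prime powers it reads
`(p - 1) ((n + 1) p - (n - 1)) ≤ (n + 1) p²`. -/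
lemma u_bound (u : ℕ → ℝ) (hu1 : u 1 = 1)
    (humul : ∀ m n : ℕ, Nat.Coprime m n → u (m * n) = u m * u n)
    (hup : ∀ p n : ℕ, p.Prime → 1 ≤ n →
      u (p ^ n) = (p : ℝ) ^ ((n : ℤ) - 2) * ((p : ℝ) - 1) *
        (((n : ℝ) + 1) * (p : ℝ) - ((n : ℝ) - 1)))
    (N : ℕ) : N ≠ 0 → 0 ≤ u N ∧ u N ≤ N * N.divisors.card := by
  induction N using Nat.recOnPosPrimePosCoprime with
  | zero => exact fun h => absurd rfl h
  | one => intro _; simp [hu1]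
  | prime_pow p n hp hn =>
    intro _
    have h2 : (2 : ℝ) ≤ p := by exact_mod_cast hp.two_le
    have hn1 : (1 : ℝ) ≤ n := by exact_mod_cast hn
    have hp0 : (p : ℝ) ≠ 0 := by positivity
    -- The exponent `n - 2` is negative when `n = 1`, so `p ^ (n - 2)` is an integer power.
    have hpow : (p : ℝ) ^ ((n : ℤ) - 2) * (p : ℝ) ^ 2 = (p : ℝ) ^ n := by
      rw [zpow_sub₀ hp0]
      norm_cast
      field_simp
    have hz : 0 < (p : ℝ) ^ ((n : ℤ) - 2) := by positivity
    rw [hup p n hp hn, Nat.divisors_prime_pow hp, Finset.card_map, Finset.card_range]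
    push_cast
    rw [← hpow, mul_assoc, mul_assoc]
    have hfac : 0 ≤ ((n : ℝ) + 1) * p - (n - 1) := by nlinarith
    refine ⟨mul_nonneg hz.le (mul_nonneg (by linarith) hfac), ?_⟩
    refine mul_le_mul_of_nonneg_left ?_ hz.le
    nlinarith
  | coprime a b ha hb hab iha ihb =>
    intro _
    obtain ⟨ha0, ha1⟩ := iha (by omega)
    obtain ⟨hb0, hb1⟩ := ihb (by omega)
    rw [humul a b hab, hab.card_divisors_mul]
    refine ⟨mul_nonneg ha0 hb0, (mul_le_mul ha1 hb1 hb0 (by positivity)).trans_eq ?_⟩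
    push_cast
    ring

/-- Let `s, u : ℕ → ℝ` be the multiplicative arithmetic functions
determined by `s (p^n) = 1 - 1/p²` and `u (p^n) = p^(n-2) (p-1) ((n+1)p - (n-1))`
for every prime `p` and `n ≥ 1`, and set `g₁(N) = (1/24) s(N) N² - (1/4) u(N) + 1`.
Then `liminf_{N → ∞} g₁(N)/N² = 1/(4π²)`. -/
theorem liminf_g1_div_sq
    (s u : ℕ → ℝ)
    (hs1 : s 1 = 1) (hu1 : u 1 = 1)
    (hsmul : ∀ m n : ℕ, Nat.Coprime m n → s (m * n) = s m * s n)
    (humul : ∀ m n : ℕ, Nat.Coprime m n → u (m * n) = u m * u n)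
    (hsp : ∀ p n : ℕ, p.Prime → 1 ≤ n → s (p ^ n) = 1 - 1 / (p : ℝ) ^ 2)
    (hup : ∀ p n : ℕ, p.Prime → 1 ≤ n →
      u (p ^ n) = (p : ℝ) ^ ((n : ℤ) - 2) * ((p : ℝ) - 1) *
        (((n : ℝ) + 1) * (p : ℝ) - ((n : ℝ) - 1))) :
    liminf (fun N : ℕ =>
        ((1 / 24) * s N * (N : ℝ) ^ 2 - (1 / 4) * u N + 1) / (N : ℝ) ^ 2) atTop
      = 1 / (4 * π ^ 2) := by
  -- The contribution of `u` and of the constant `1` is `o(1)`.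
  have herr : Tendsto (fun N : ℕ => (-(1 / 4) * u N + 1) / (N : ℝ) ^ 2) atTop (𝓝 0) := by
    have hlim : Tendsto (fun N : ℕ => 2 / √(N : ℝ)) atTop (𝓝 0) :=
      (tendsto_sqrt_atTop.comp tendsto_natCast_atTop_atTop).const_div_atTop 2
    refine squeeze_zero_norm' ?_ hlim
    filter_upwards [eventually_ge_atTop 1] with N hN
    obtain ⟨h0, h1⟩ := u_bound u hu1 humul hup N (by omega)
    have hN1 : (1 : ℝ) ≤ N := by exact_mod_cast hN
    have hd : (N.divisors.card : ℝ) ≤ 2 * √(N : ℝ) := by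
      have h : (N.divisors.card : ℝ) ≤ 2 * (N.sqrt : ℝ) := by
        exact_mod_cast card_divisors_le_two_sqrt N
      linarith [Real.nat_sqrt_le_real_sqrt (a := N)]
    have hr : √(N : ℝ) * √(N : ℝ) = N := Real.mul_self_sqrt (by positivity)
    have hr1 : 1 ≤ √(N : ℝ) := Real.one_le_sqrt.2 hN1
    have hu2 : u N ≤ N * (2 * √(N : ℝ)) := h1.trans (by gcongr)
    have hNr : 1 ≤ N * √(N : ℝ) := one_le_mul_of_one_le_of_one_le hN1 hr1
    rw [Real.norm_eq_abs, abs_div, abs_of_pos (show (0 : ℝ) < (N : ℝ) ^ 2 by positivity),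
      div_le_div_iff₀ (by positivity) (by positivity)]
    have habs : |-(1 / 4) * u N + 1| ≤ 2 * (N * √(N : ℝ)) := by
      rw [abs_le]
      constructor <;> linarith
    calc |-(1 / 4) * u N + 1| * √(N : ℝ) ≤ 2 * (N * √(N : ℝ)) * √(N : ℝ) := by gcongr
      _ = 2 * (N * (√(N : ℝ) * √(N : ℝ))) := by ring
      _ = 2 * (N : ℝ) ^ 2 := by rw [hr]; ring
  set f : ℕ → ℝ := fun N =>
    ((1 / 24) * s N * (N : ℝ) ^ 2 - (1 / 4) * u N + 1) / (N : ℝ) ^ 2 with hf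
  have hsplit : ∀ N : ℕ, N ≠ 0 →
      f N = (1 / 24) * s N + (-(1 / 4) * u N + 1) / (N : ℝ) ^ 2 := by
    intro N hN
    have : (N : ℝ) ≠ 0 := by exact_mod_cast hN
    simp only [hf]
    field_simp
    ring
  have hconst : (1 / 24) * (π ^ 2 / 6)⁻¹ = 1 / (4 * π ^ 2) := by
    have := Real.pi_ne_zero
    field_simp
    norm_num
  have hlow : Tendsto
      (fun N : ℕ => 1 / (4 * π ^ 2) + (-(1 / 4) * u N + 1) / (N : ℝ) ^ 2) atTop
      (𝓝 (1 / (4 * π ^ 2))) := by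
    have h := herr.const_add (1 / (4 * π ^ 2))
    rwa [add_zero] at h
  have hle : ∀ᶠ N : ℕ in atTop,
      1 / (4 * π ^ 2) + (-(1 / 4) * u N + 1) / (N : ℝ) ^ 2 ≤ f N := by
    filter_upwards [eventually_ne_atTop 0] with N hN
    rw [hsplit N hN, s_eq_prod s hs1 hsmul hsp hN, ← hconst]
    gcongr
    · exact Finset.prod_pos fun p hp =>
        zero_lt_one.trans_le (one_le_euler_factor (Nat.prime_of_mem_primeFactors hp))
    · exact prod_primeFactors_le N
  have hfact : Tendsto Nat.factorial atTop atTop :=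
    tendsto_atTop_mono Nat.self_le_factorial tendsto_id
  have hsub : Tendsto (f ∘ Nat.factorial) atTop (𝓝 (1 / (4 * π ^ 2))) := by
    have h1 : Tendsto (fun k : ℕ => (1 / 24) * (eulerPartial (k + 1))⁻¹) atTop
        (𝓝 ((1 / 24) * (π ^ 2 / 6)⁻¹)) :=
      (((tendsto_add_atTop_iff_nat 1).2 tendsto_eulerPartial).inv₀ (by positivity)).const_mul _
    have h2 := h1.add (herr.comp hfact)
    rw [hconst, add_zero] at h2
    refine h2.congr fun k => ?_
    have hk := Nat.factorial_ne_zero k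
    simp only [Function.comp_apply]
    rw [hsplit _ hk, s_eq_prod s hs1 hsmul hsp hk, primeFactors_factorial_eq, eulerPartial]
  have hsub' : Tendsto f (map Nat.factorial atTop) (𝓝 (1 / (4 * π ^ 2))) := tendsto_map'_iff.2 hsub
  have hbdd : IsBoundedUnder (· ≥ ·) atTop f := hlow.isBoundedUnder_ge.mono_ge hle
  have hcobdd : IsCoboundedUnder (· ≥ ·) atTop f :=
    hsub'.isCoboundedUnder_ge.mono (map_mono hfact)
  -- Real liminf needs boundedness: below from `hle`, coboundedness from the factorials.
  refine le_antisymm ?_ ?_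
  · rw [← hsub'.liminf_eq]
    exact liminf_le_liminf_of_le hfact hbdd hsub'.isCoboundedUnder_ge
  · rw [← hlow.liminf_eq]
    exact liminf_le_liminf hle hlow.isBoundedUnder_ge hcobdd
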